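/- For every complex number z with Re(z) > 1, one has (1 − 2^{1−z})·ζ(z) = 1 + ∑_{r ∈ S} (−1)^{r−1}·( cosh(z·log r/2)/(2·sinh(z·log r/2)) − 1/2 ), where S is the set of integers r ≥ 2 that are not perfect powers. -/

import Mathlib

/-- The set of integers `r ≥ 2` that are not perfect powers, i.e. not of the form
`a ^ k` with `a ≥ 2` and `k ≥ 2`. -/
def nonPerfectPowers : Set ℕ :=
  {r | 2 ≤ r ∧ ¬ ∃ a k : ℕ, 2 ≤ a ∧ 2 ≤ k ∧ a ^ k = r}

lemma npp_surj (n : ℕ) (hn : 2 ≤ n) : ∃ r ∈ nonPerfectPowers, ∃ k : ℕ, r ^ (k + 1) = n := by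
  induction n using Nat.strong_induction_on with
  | _ n ih =>
    by_cases h : ∃ a k : ℕ, 2 ≤ a ∧ 2 ≤ k ∧ a ^ k = n
    · obtain ⟨a, k, ha, hk, rfl⟩ := h
      have hlt : a < a ^ k := lt_self_pow₀ (by omega) (by omega)
      obtain ⟨r, hr, j, hj⟩ := ih a hlt ha
      refine ⟨r, hr, (j + 1) * k - 1, ?_⟩
      have : 1 ≤ (j + 1) * k := Nat.mul_pos (by omega) (by omega)
      rw [Nat.sub_add_cancel this, pow_mul, hj]
    · exact ⟨n, ⟨hn, h⟩, 0, by simp⟩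

lemma npp_aux {r c m : ℕ} (hr : r ∈ nonPerfectPowers) (h : r = c ^ m) : m = 1 := by
  obtain ⟨h2, hn⟩ := hr
  by_contra hm
  have hm0 : m ≠ 0 := by rintro rfl; simp at h; omega
  have hc : 2 ≤ c := by
    by_contra hc
    have : c = 0 ∨ c = 1 := by omega
    rcases this with rfl | rfl
    · rw [zero_pow hm0] at h; omega
    · rw [one_pow] at h; omega
  exact hn ⟨c, m, hc, by omega, h.symm⟩

lemma npp_inj {r s a b : ℕ} (hr : r ∈ nonPerfectPowers) (hs : s ∈ nonPerfectPowers)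
    (h : r ^ (a + 1) = s ^ (b + 1)) : r = s ∧ a = b := by
  have hg : 0 < Nat.gcd (a + 1) (b + 1) := Nat.gcd_pos_of_pos_left _ (by omega)
  obtain ⟨g, m, n, hg0, hco, hm, hn⟩ := Nat.exists_coprime' hg
  rw [hm, hn, pow_mul, pow_mul] at h
  have h' : r ^ m = s ^ n := Nat.pow_left_injective (by omega) h
  obtain ⟨c, hc1, hc2⟩ := (Nat.exists_eq_pow_of_exponent_coprime_of_pow_eq_pow hco h')
  have h1 := npp_aux hr hc1
  have h2 := npp_aux hs hc2
  subst h1 h2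
  refine ⟨by simpa using h', by omega⟩

lemma eta_hasSum (z : ℂ) (hz : 1 < z.re) :
    Summable (fun n : ℕ => (-(-1 : ℂ) ^ n) * (1 / (n : ℂ) ^ z)) ∧
    ∑' n : ℕ, (-(-1 : ℂ) ^ n) * (1 / (n : ℂ) ^ z) = (1 - (2 : ℂ) ^ (1 - z)) * riemannZeta z := by
  have hs := Complex.summable_one_div_nat_cpow.2 hz
  have hsum : Summable (fun n : ℕ => (-(-1 : ℂ) ^ n) * (1 / (n : ℂ) ^ z)) := by
    refine Summable.of_norm_bounded hs.norm fun n => ?_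
    simp
  refine ⟨hsum, ?_⟩
  have he : Function.Injective (fun k : ℕ => 2 * k) := fun a b h => by simpa using h
  have ho : Function.Injective (fun k : ℕ => 2 * k + 1) := fun a b h => by simpa using h
  set g : ℕ → ℂ := fun n => 1 / (n : ℂ) ^ z with hg
  have h1 : Summable fun k => g (2 * k) := hs.comp_injective he
  have h2 : Summable fun k => g (2 * k + 1) := hs.comp_injective ho
  have e1 : ∑' k, g (2 * k) + ∑' k, g (2 * k + 1) = ∑' n, g n := tsum_even_add_odd h1 h2
  have s1 : ∀ k : ℕ, (-(-1 : ℂ) ^ (2 * k)) * g (2 * k) = - g (2 * k) := fun k => by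
    rw [pow_mul]; simp
  have s2 : ∀ k : ℕ, (-(-1 : ℂ) ^ (2 * k + 1)) * g (2 * k + 1) = g (2 * k + 1) := fun k => by
    rw [pow_succ, pow_mul]; simp
  have e2 := tsum_even_add_odd (f := fun n : ℕ => (-(-1 : ℂ) ^ n) * g n)
    (by simp only [s1]; exact h1.neg) (by simp only [s2]; exact h2)
  simp only [s1, s2, tsum_neg] at e2
  have hz' : ∑' n, g n = riemannZeta z := (zeta_eq_tsum_one_div_nat_cpow hz).symm
  have e3 : ∑' k : ℕ, g (2 * k) = (2 ^ z)⁻¹ * riemannZeta z := by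
    rw [← hz', ← tsum_mul_left]
    refine tsum_congr fun k => ?_
    simp only [hg]
    rw [Nat.cast_mul, Complex.natCast_mul_natCast_cpow]
    simp [mul_comm]
  rw [hz', e3] at e1
  rw [e3] at e2
  have e4 : (2 : ℂ) ^ (1 - z) = 2 * (2 ^ z)⁻¹ := by
    rw [Complex.cpow_sub _ _ two_ne_zero, Complex.cpow_one, div_eq_mul_inv]
  rw [e4]
  change ∑' n : ℕ, (-(-1 : ℂ) ^ n) * g n = _
  rw [← e2]
  linear_combination e1

lemma coth_term (z : ℂ) (hz : 1 < z.re) (r : ℕ) (hr : 2 ≤ r) :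
    ∑' k : ℕ, (-(-1 : ℂ) ^ (r ^ (k + 1))) * (1 / ((r ^ (k + 1) : ℕ) : ℂ) ^ z) =
    (-1 : ℂ) ^ (r - 1) * (Complex.cosh (z * Real.log r / 2) /
            (2 * Complex.sinh (z * Real.log r / 2)) - 1 / 2) := by
  have hsign : ∀ k : ℕ, (-(-1 : ℂ) ^ (r ^ (k + 1))) = (-1) ^ (r - 1) := by
    intro k
    obtain ⟨m, rfl⟩ : ∃ m, r = m + 1 := ⟨r - 1, by omega⟩
    rcases Nat.even_or_odd (m + 1) with h | h
    · have h1 : Even ((m + 1) ^ (k + 1)) := h.pow_of_ne_zero (by omega)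
      have h2 : Odd m := by grind
      simp [h1.neg_one_pow, h2.neg_one_pow]
    · have h1 : Odd ((m + 1) ^ (k + 1)) := h.pow
      have h2 : Even m := by grind
      simp [h1.neg_one_pow, h2.neg_one_pow]
  simp only [hsign]
  rw [tsum_mul_left]
  congr 1
  have hr0 : (r : ℂ) ≠ 0 := by norm_cast; omega
  set w : ℂ := z * Real.log r / 2 with hw
  have hq : (r : ℂ) ^ (-z) = Complex.exp (-w) ^ 2 := by
    rw [Complex.cpow_def_of_ne_zero hr0, ← Complex.exp_nat_mul, hw, Complex.ofReal_log (by positivity)]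
    congr 1
    push_cast
    ring
  have hn : ‖(r : ℂ) ^ (-z)‖ < 1 := by
    rw [Complex.norm_natCast_cpow_of_pos (by omega)]
    exact Real.rpow_lt_one_of_one_lt_of_neg (by exact_mod_cast hr) (by simp; linarith)
  have ht : ∀ k : ℕ, 1 / ((r ^ (k + 1) : ℕ) : ℂ) ^ z = (r : ℂ) ^ (-z) * ((r : ℂ) ^ (-z)) ^ k := by
    intro k
    rw [← pow_succ', one_div, ← Complex.cpow_neg, Nat.cast_pow, ← Complex.natCast_cpow_natCast_mul,
      mul_comm, Complex.cpow_mul_nat]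
  simp only [ht]
  rw [tsum_mul_left, tsum_geometric_of_norm_lt_one hn]
  have hne : 1 - (r : ℂ) ^ (-z) ≠ 0 := by
    intro h
    have : (r : ℂ) ^ (-z) = 1 := by linear_combination -h
    rw [this] at hn
    simp at hn
  rw [hq] at hne ⊢
  have hE : Complex.exp w * Complex.exp (-w) = 1 := by rw [← Complex.exp_add]; simp
  have hE0 := Complex.exp_ne_zero (-w)
  have hEw : Complex.exp w = (Complex.exp (-w))⁻¹ := eq_inv_of_mul_eq_one_left hE
  rw [Complex.cosh, Complex.sinh, hEw]
  set u := Complex.exp (-w)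
  have h3 : u⁻¹ - u ≠ 0 := by
    intro h
    apply hne
    field_simp at h
    simpa using h
  have h4 : u⁻¹ - u = (1 - u ^ 2) / u := by field_simp
  rw [h4]
  field_simp
  ring

theorem one_sub_two_pow_mul_zeta_eq_alternating_tsum_coth
    (z : ℂ) (hz : 1 < z.re) :
    (1 - (2 : ℂ) ^ (1 - z)) * riemannZeta z =
      1 + ∑' r : nonPerfectPowers,
        (-1 : ℂ) ^ ((r : ℕ) - 1) *
          (Complex.cosh (z * Real.log (r : ℕ) / 2) /
            (2 * Complex.sinh (z * Real.log (r : ℕ) / 2)) - 1 / 2) := by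
  obtain ⟨hs, ht⟩ := eta_hasSum z hz
  have hinj : Function.Injective (fun p : nonPerfectPowers × ℕ => (p.1 : ℕ) ^ (p.2 + 1)) := by
    rintro ⟨⟨r, hr⟩, a⟩ ⟨⟨s, hs⟩, b⟩ h
    obtain ⟨rfl, rfl⟩ := npp_inj hr hs h
    rfl
  rw [← ht, hs.tsum_eq_add_tsum_ite 1]
  congr 1
  · simp
  rw [← hinj.tsum_eq]
  · have hone : ∀ p : nonPerfectPowers × ℕ, (p.1 : ℕ) ^ (p.2 + 1) ≠ 1 := fun p h => by
      have := p.1.2.1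
      rw [Nat.pow_eq_one] at h
      omega
    simp only [hone, if_false]
    have hs2 := hs.comp_injective hinj
    rw [Function.comp_def] at hs2
    rw [hs2.tsum_prod]
    exact tsum_congr fun r => coth_term z hz r r.2.1
  · intro n hn
    have : 2 ≤ n := by
      by_contra h
      have : n = 0 ∨ n = 1 := by omega
      have hz0 : z ≠ 0 := by rintro rfl; simp at hz; linarith
      rcases this with rfl | rfl <;> simp [hz0] at hn
    obtain ⟨r, hr, k, hk⟩ := npp_surj n this
    exact ⟨(⟨r, hr⟩, k), hk⟩
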